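/- Nesting of the wavelet matrices: let n ≥ 2, let C^n₁ be the (n+1)×(n+1) matrix with entries (C^n₁)_{i,j} = c_{i,j} for 0 ≤ i,j ≤ n, and let C^{n−1}₁ be its leading principal n×n submatrix. Let D^n (resp. D^{n−1}) be the unique upper triangular matrix with positive diagonal entries and bottom-right entry 1 satisfying the wavelet orthogonality conditions for C^n₁ (resp. C^{n−1}₁), i.e. with (D₋₁)_{i,j} = (−1)^{i+j+1}(D₁)_{i,j} and (C₋₁)_{i,j} = (−1)^{i+j}(C₁)_{i,j} one has C₋₁·D₋₁ᵀ + C₁·D₁ᵀ = 0 and D₋₁·D₋₁ᵀ + D₁·D₁ᵀ = 2·I. Then for every j with 1 ≤ j and n−2j ≥ 0: (D^n)_{n−2j,n} = 0, and (D^n)_{n−2j,m} = (D^{n−1})_{n−2j,m} for every m with n−2j ≤ m ≤ n−1. -/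

import Mathlib

/-!
Write `d_k` for the rows of `D` and `c_i` for those of `C`. The signs in the wavelet conditions
turn them into parity conditions (`IsWaveletMatrix.rows`): `d_k ⟂ c_i` when `i + k` is odd, and
`⟨d_k, d_l⟩ = δ_{kl}` when `k + l` is even.

The last row of `Dⁿ` is a multiple of the last unit vector, so each row `d_{n-2j}`, being
orthogonal to it, has last entry `0`. Cutting off that entry leaves vectors of length `n` that
satisfy the same conditions as the corresponding rows of `Dⁿ⁻¹`, so a uniqueness statement
suffices (`wavelet_row_unique`). Let `V_k` be the space of vectors supported on indices `≥ k` and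
orthogonal to all `c_i` with `i + k` odd. As `C` is lower triangular with nonzero diagonal, a
vector of `V_k` whose `k`-th entry vanishes lies in `V_{k+2}` (`InV.drop`); hence `V_k` is spanned
by `d_k, d_{k+2}, …` (`dotN_eq_zero_of_span`). If `d_k` and `e_k` are two candidates, then
`z = d_k - t e_k ∈ V_{k+2}` for a suitable `t > 0`, while `d_k` and `e_k` are both orthogonal to
`V_{k+2}`. So `z = 0`, and normalisation gives `t = 1`.

That `C` is lower triangular with nonzero diagonal (`alpertC_eq_zero`, `alpertC_self_ne_zero`)
follows from Rodrigues' formula by integrating by parts `j` times after substituting `u = 2t - 1`.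
-/

open MeasureTheory

/-- The orthonormal Legendre polynomial of degree `n` on `[-1,1]`,
`p̂_n(t) = sqrt((2n+1)/2) · (1/(2^n n!)) dⁿ/dtⁿ (t²-1)ⁿ`. -/
noncomputable def legendreHat (n : ℕ) : ℝ → ℝ := fun t =>
  Real.sqrt ((2 * n + 1) / 2) * ((1 : ℝ) / (2 ^ n * n.factorial)) *
    iteratedDeriv n (fun s => (s ^ 2 - 1) ^ n) t

/-- The Alpert refinement coefficients `c_{i,j} = 2∫_0^1 p̂_i(t) p̂_j(2t-1) dt`. -/
noncomputable def alpertC (i j : ℕ) : ℝ :=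
  2 * ∫ t in (0:ℝ)..1, legendreHat i t * legendreHat j (2 * t - 1)

open Matrix

/-- `D` is the wavelet matrix for the refinement matrix `C`: it is upper triangular with
positive diagonal entries, has bottom-right entry `1`, and together with
`D₋₁` (defined by `(D₋₁)_{i,j} = (-1)^{i+j+1} D_{i,j}`) satisfies the wavelet
orthogonality conditions `C₋₁·D₋₁ᵀ + C·Dᵀ = 0` and `D₋₁·D₋₁ᵀ + D·Dᵀ = 2·I`,
where `(C₋₁)_{i,j} = (-1)^{i+j} C_{i,j}`. -/
def IsWaveletMatrix {m : ℕ} (C D : Matrix (Fin m) (Fin m) ℝ) : Prop :=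
  (∀ i j : Fin m, j < i → D i j = 0) ∧
  (∀ i : Fin m, 0 < D i i) ∧
  (∀ i : Fin m, (i : ℕ) = m - 1 → D i i = 1) ∧
  (Matrix.of fun i j : Fin m => (-1 : ℝ) ^ ((i : ℕ) + (j : ℕ)) * C i j) *
      (Matrix.of fun i j : Fin m => (-1 : ℝ) ^ ((i : ℕ) + (j : ℕ) + 1) * D i j)ᵀ +
    C * Dᵀ = 0 ∧
  (Matrix.of fun i j : Fin m => (-1 : ℝ) ^ ((i : ℕ) + (j : ℕ) + 1) * D i j) *
      (Matrix.of fun i j : Fin m => (-1 : ℝ) ^ ((i : ℕ) + (j : ℕ) + 1) * D i j)ᵀ +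
    D * Dᵀ = (2 : ℝ) • (1 : Matrix (Fin m) (Fin m) ℝ)

/-! ### Uniqueness of wavelet rows -/

/-- The standard inner product of the first `n` entries of two real sequences. -/
def dotN (n : ℕ) (x y : ℕ → ℝ) : ℝ := ∑ m ∈ Finset.range n, x m * y m

/-- `x` vanishes below index `k` and its first `n` entries are orthogonal to every row `c i`,
`i < n`, whose parity is opposite to that of `k`. -/
def InV (n : ℕ) (c : ℕ → ℕ → ℝ) (k : ℕ) (x : ℕ → ℝ) : Prop :=
  (∀ m < k, x m = 0) ∧ ∀ i < n, Odd (i + k) → dotN n (c i) x = 0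

lemma dotN_sub_smul (n : ℕ) (w x y : ℕ → ℝ) (t : ℝ) :
    dotN n w (fun m => x m - t * y m) = dotN n w x - t * dotN n w y := by
  simp only [dotN, Finset.mul_sum, ← Finset.sum_sub_distrib]
  exact Finset.sum_congr rfl fun m _ => by ring

lemma dotN_comm (n : ℕ) (x y : ℕ → ℝ) : dotN n x y = dotN n y x :=
  Finset.sum_congr rfl fun _ _ => mul_comm _ _

lemma InV.sub_smul {n : ℕ} {c : ℕ → ℕ → ℝ} {k : ℕ} {x y : ℕ → ℝ} (hx : InV n c k x)
    (hy : InV n c k y) (t : ℝ) : InV n c k (fun m => x m - t * y m) := by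
  refine ⟨fun m hm => by simp [hx.1 m hm, hy.1 m hm], fun i hi ho => ?_⟩
  rw [dotN_sub_smul, hx.2 i hi ho, hy.2 i hi ho]; ring

/-- Orthogonality to `c (k + 1)`, which is supported on indices `≤ k + 1`, forces the
entry at `k + 1` to vanish as soon as the one at `k` does. -/
lemma InV.drop {n : ℕ} {c : ℕ → ℕ → ℝ} (hc : ∀ i j, i < j → c i j = 0)
    (hd : ∀ i, c i i ≠ 0) {k : ℕ} {x : ℕ → ℝ} (hx : InV n c k x) (hk : k + 2 ≤ n)
    (h0 : x k = 0) : InV n c (k + 2) x := by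
  have h1 : x (k + 1) = 0 := by
    have h := hx.2 (k + 1) (by omega) ⟨k, by ring⟩
    rw [dotN, Finset.sum_eq_single (k + 1)] at h
    · exact (mul_eq_zero.mp h).resolve_left (hd _)
    · intro m _ hne
      rcases lt_trichotomy m k with hm | hm | hm
      · rw [hx.1 m hm, mul_zero]
      · rw [hm, h0, mul_zero]
      · rw [hc _ _ (by omega), zero_mul]
    · intro hm; exact absurd (Finset.mem_range.mpr (by omega)) hm
  refine ⟨fun m hm => ?_, fun i hi ho => hx.2 i hi ?_⟩
  · rcases lt_trichotomy m k with h | h | h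
    · exact hx.1 m h
    · rw [h, h0]
    · rw [show m = k + 1 by omega, h1]
  · rw [Nat.odd_iff] at ho ⊢; omega

/-- The vectors `d l` with `l ≥ k` of the parity of `k` span `InV n c k` modulo entries of index
`≥ n`, stated in dual form. -/
lemma dotN_eq_zero_of_span {n : ℕ} {c d : ℕ → ℕ → ℝ} (hc : ∀ i j, i < j → c i j = 0)
    (hd : ∀ i, c i i ≠ 0) (w : ℕ → ℝ) (j : ℕ) : ∀ (k : ℕ) (_ : n = k + 2 * j)
    (_ : ∀ l, k ≤ l → l < n → Even (l + k) → InV n c l (d l) ∧ d l l ≠ 0 ∧ dotN n w (d l) = 0)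
    (x : ℕ → ℝ) (_ : InV n c k x), dotN n w x = 0 := by
  induction j with
  | zero =>
    intro k hk _ x hx
    refine Finset.sum_eq_zero fun m hm => ?_
    rw [hx.1 m (by have := Finset.mem_range.mp hm; omega), mul_zero]
  | succ j ih =>
    intro k hk hl x hx
    obtain ⟨hk1, hk2, hk3⟩ := hl k le_rfl (by omega) ⟨k, rfl⟩
    have hz := (hx.sub_smul hk1 (x k / d k k)).drop hc hd (by omega) (by field_simp; ring)
    have h := ih (k + 2) (by omega) (fun l h1 h2 h3 => hl l (by omega) h2
      (by rw [Nat.even_iff] at h3 ⊢; omega)) _ hz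
    rw [dotN_sub_smul, hk3] at h
    linarith

/-- The `k`-th row is determined on its first `n` entries by the wavelet conditions on the rows
`l ≥ k` of the parity of `k`, here that of `n`. -/
lemma wavelet_row_unique {n : ℕ} {c d e : ℕ → ℕ → ℝ} (hc : ∀ i j, i < j → c i j = 0)
    (hd : ∀ i, c i i ≠ 0) {k j : ℕ} (hk : n = k + 2 * (j + 1))
    (h1 : ∀ l, k ≤ l → l < n → Even (l + k) →
      InV n c l (d l) ∧ 0 < d l l ∧ dotN n (d k) (d l) = if l = k then 1 else 0)
    (h2 : ∀ l, k ≤ l → l < n → Even (l + k) →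
      InV n c l (e l) ∧ 0 < e l l ∧ dotN n (e k) (e l) = if l = k then 1 else 0) :
    ∀ m < n, d k m = e k m := by
  obtain ⟨a1, a2, a3⟩ := h1 k le_rfl (by omega) ⟨k, rfl⟩
  obtain ⟨b1, b2, b3⟩ := h2 k le_rfl (by omega) ⟨k, rfl⟩
  rw [if_pos rfl] at a3 b3
  set t := d k k / e k k with ht
  set z : ℕ → ℝ := fun m => d k m - t * e k m with hzdef
  -- `z` lies in the span of the later rows, to which both `d k` and `e k` are orthogonal.
  have hz : InV n c (k + 2) z :=
    (a1.sub_smul b1 t).drop hc hd (by omega) (by rw [ht]; field_simp; ring)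
  have hdz : dotN n (d k) z = 0 :=
    dotN_eq_zero_of_span (d := d) hc hd _ j (k + 2) (by omega) (fun l p q r => by
      obtain ⟨u, v, w⟩ := h1 l (by omega) q (by rw [Nat.even_iff] at r ⊢; omega)
      exact ⟨u, v.ne', by rw [w, if_neg (by omega)]⟩) z hz
  have hez : dotN n (e k) z = 0 :=
    dotN_eq_zero_of_span (d := e) hc hd _ j (k + 2) (by omega) (fun l p q r => by
      obtain ⟨u, v, w⟩ := h2 l (by omega) q (by rw [Nat.even_iff] at r ⊢; omega)
      exact ⟨u, v.ne', by rw [w, if_neg (by omega)]⟩) z hz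
  rw [hzdef, dotN_sub_smul, a3] at hdz
  rw [hzdef, dotN_sub_smul, b3, dotN_comm] at hez
  have htpos : 0 < t := div_pos a2 b2
  have ht1 : t = 1 := by nlinarith
  have hzz : dotN n z z = 0 := by
    rw [hzdef, dotN_sub_smul, dotN_comm n _ (d k), dotN_comm n _ (e k), dotN_sub_smul,
      dotN_sub_smul, a3, b3, dotN_comm n (e k)]
    nlinarith
  have := (Finset.sum_eq_zero_iff_of_nonneg (fun m _ => mul_self_nonneg (z m))).mp hzz
  intro m hm
  have h := mul_self_eq_zero.mp (this m (Finset.mem_range.mpr hm))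
  simp only [hzdef, ht1] at h
  linarith

/-! ### Triangularity of the refinement matrix -/

open Polynomial in
/-- The unnormalised Rodrigues polynomial, the `n`-th derivative of `(X² - 1)ⁿ`. -/
noncomputable def rodrigues (n : ℕ) : ℝ[X] := derivative^[n] ((X ^ 2 - 1) ^ n)

open Polynomial in
lemma iteratedDeriv_polynomial_eval (p : ℝ[X]) (k : ℕ) :
    iteratedDeriv k (fun t => p.eval t) = fun t => (derivative^[k] p).eval t := by
  induction k with
  | zero => simp
  | succ k ih =>
    rw [iteratedDeriv_succ, ih]
    funext t
    rw [Polynomial.deriv, Function.iterate_succ_apply']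

lemma legendreHat_eq (n : ℕ) : ∃ a : ℝ, a ≠ 0 ∧
    ∀ t, legendreHat n t = a * (rodrigues n).eval t := by
  refine ⟨Real.sqrt ((2 * n + 1) / 2) * ((1 : ℝ) / (2 ^ n * n.factorial)), ?_, fun t => ?_⟩
  · positivity
  · have h : (fun s : ℝ => (s ^ 2 - 1) ^ n) =
        fun s => (((Polynomial.X ^ 2 - 1) ^ n : Polynomial ℝ)).eval s := by
      funext s; simp
    rw [legendreHat, h, iteratedDeriv_polynomial_eval, rodrigues]

open Polynomial in
lemma natDegree_rodrigues (n : ℕ) : (rodrigues n).natDegree = n := by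
  have hm : ((X ^ 2 - 1 : ℝ[X]) ^ n).natDegree = 2 * n := by
    rw [natDegree_pow, ← C_1, natDegree_X_pow_sub_C, mul_comm]
  have hc : ((X ^ 2 - 1 : ℝ[X]) ^ n).coeff (n + n) = 1 := by
    have hmon : ((X ^ 2 - 1 : ℝ[X]) ^ n).Monic :=
      (by simpa using monic_X_pow_sub_C (1 : ℝ) two_ne_zero : (X ^ 2 - 1 : ℝ[X]).Monic).pow n
    have := hmon.coeff_natDegree
    rwa [hm, two_mul] at this
  apply natDegree_eq_of_le_of_coeff_ne_zero
  · exact (natDegree_iterate_derivative _ _).trans (by rw [hm]; omega)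
  · rw [rodrigues, coeff_iterate_derivative, hc]
    have := Nat.descFactorial_pos.mpr (show n ≤ n + n by omega)
    simp only [nsmul_eq_mul, mul_one]
    exact_mod_cast this.ne'

open Polynomial in
lemma eval_iterate_derivative_eq_zero {k j : ℕ} (hk : k < j) {x : ℝ} (hx : x ^ 2 - 1 = 0) :
    (derivative^[k] ((X ^ 2 - 1 : ℝ[X]) ^ j)).eval x = 0 := by
  obtain ⟨q, hq⟩ := pow_sub_dvd_iterate_derivative_pow (X ^ 2 - 1 : ℝ[X]) j k
  rw [hq]
  simp [hx, show j - k ≠ 0 by omega]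

open Polynomial in
/-- Repeated integration by parts; the boundary terms vanish since `±1` are zeros of order `j`
of `(X² - 1)ʲ`. -/
lemma integral_mul_iterate_derivative (j k : ℕ) : ∀ (_ : k ≤ j) (q : ℝ[X]),
    ∫ u in (-1 : ℝ)..1, q.eval u * (derivative^[k] ((X ^ 2 - 1 : ℝ[X]) ^ j)).eval u =
      (-1) ^ k * ∫ u in (-1 : ℝ)..1, (derivative^[k] q).eval u *
        ((X ^ 2 - 1 : ℝ[X]) ^ j).eval u := by
  induction k with
  | zero => intro _ q; simp
  | succ k ih =>
    intro hk q
    have h := intervalIntegral.integral_mul_deriv_eq_deriv_mul (a := (-1 : ℝ)) (b := 1)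
      (u := fun u => q.eval u) (u' := fun u => (derivative q).eval u)
      (v := fun u => (derivative^[k] ((X ^ 2 - 1 : ℝ[X]) ^ j)).eval u)
      (v' := fun u => (derivative (derivative^[k] ((X ^ 2 - 1 : ℝ[X]) ^ j))).eval u)
      (fun x _ => q.hasDerivAt x) (fun x _ => Polynomial.hasDerivAt _ x)
      ((Polynomial.continuous _).intervalIntegrable _ _)
      ((Polynomial.continuous _).intervalIntegrable _ _)
    rw [Function.iterate_succ_apply', h, ih (by omega),
      eval_iterate_derivative_eq_zero (by omega) (by norm_num),
      eval_iterate_derivative_eq_zero (by omega) (by norm_num), Function.iterate_succ_apply]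
    ring

open Polynomial in
/-- The polynomial `u ↦ Rᵢ((u + 1) / 2)`, with `Rᵢ` the Rodrigues polynomial. -/
noncomputable def rodriguesHalf (i : ℕ) : ℝ[X] := (rodrigues i).comp (C 2⁻¹ * X + C 2⁻¹)

lemma natDegree_rodriguesHalf (i : ℕ) : (rodriguesHalf i).natDegree = i := by
  rw [rodriguesHalf, Polynomial.natDegree_comp, natDegree_rodrigues,
    Polynomial.natDegree_linear (by norm_num), mul_one]

open Polynomial in
/-- The substitution `u = 2t - 1` followed by `j` integrations by parts. -/
lemma alpertC_eq (i j : ℕ) : ∃ b : ℝ, b ≠ 0 ∧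
    alpertC i j = b * ∫ u in (-1 : ℝ)..1,
      (derivative^[j] (rodriguesHalf i)).eval u * ((X ^ 2 - 1 : ℝ[X]) ^ j).eval u := by
  obtain ⟨a, ha, hi⟩ := legendreHat_eq i
  obtain ⟨b, hb, hj⟩ := legendreHat_eq j
  refine ⟨a * b * (-1) ^ j, by simp [ha, hb], ?_⟩
  have h : ∀ t : ℝ, legendreHat i t * legendreHat j (2 * t - 1) =
      (fun u => a * b * ((rodriguesHalf i).eval u * (rodrigues j).eval u)) (2 * t - 1) := by
    intro t
    have : (2⁻¹ : ℝ) * (2 * t - 1) + 2⁻¹ = t := by ring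
    simp only [hi, hj, rodriguesHalf, eval_comp, eval_add, eval_mul, eval_C, eval_X, this]
    ring
  simp only [alpertC, h]
  rw [intervalIntegral.integral_comp_mul_sub
    (fun u => a * b * ((rodriguesHalf i).eval u * (rodrigues j).eval u)) two_ne_zero,
    intervalIntegral.integral_const_mul]
  norm_num
  have := integral_mul_iterate_derivative j j le_rfl (rodriguesHalf i)
  simp only [eval_pow, eval_sub, eval_X, eval_one] at this
  rw [rodrigues, this]
  ring

lemma alpertC_eq_zero (i j : ℕ) (hij : i < j) : alpertC i j = 0 := by
  obtain ⟨b, _, h⟩ := alpertC_eq i j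
  rw [h, Polynomial.iterate_derivative_eq_zero (by rwa [natDegree_rodriguesHalf])]
  simp

open Polynomial in
lemma alpertC_self_ne_zero (i : ℕ) : alpertC i i ≠ 0 := by
  obtain ⟨b, hb, h⟩ := alpertC_eq i i
  have hdeg : (derivative^[i] (rodriguesHalf i)).natDegree = 0 := by
    have := natDegree_iterate_derivative (rodriguesHalf i) i
    rw [natDegree_rodriguesHalf] at this
    omega
  have hlead : (rodriguesHalf i).coeff i ≠ 0 := by
    rcases Nat.eq_zero_or_pos i with rfl | hi
    · simp [rodriguesHalf, rodrigues]
    · have h1 : rodriguesHalf i ≠ 0 := by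
        intro h0
        have := natDegree_rodriguesHalf i
        rw [h0, natDegree_zero] at this
        omega
      have := leadingCoeff_ne_zero.mpr h1
      rwa [leadingCoeff, natDegree_rodriguesHalf] at this
  have hc : (derivative^[i] (rodriguesHalf i)).coeff 0 ≠ 0 := by
    rw [coeff_iterate_derivative, zero_add, Nat.descFactorial_self, nsmul_eq_mul]
    exact mul_ne_zero (by exact_mod_cast i.factorial_ne_zero) hlead
  have hint : ∫ u in (-1 : ℝ)..1, (u ^ 2 - 1) ^ i ≠ 0 := by
    have hpos : 0 < ∫ u in (-1 : ℝ)..1, (1 - u ^ 2) ^ i :=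
      intervalIntegral.intervalIntegral_pos_of_pos_on
        ((by fun_prop : Continuous fun u : ℝ => (1 - u ^ 2) ^ i).intervalIntegrable _ _)
        (fun u hu => pow_pos (by nlinarith [hu.1, hu.2]) i) (by norm_num)
    have : ∀ u : ℝ, (u ^ 2 - 1) ^ i = (-1) ^ i * (1 - u ^ 2) ^ i := fun u => by
      rw [← mul_pow]; congr 1; ring
    simp only [this, intervalIntegral.integral_const_mul]
    exact mul_ne_zero (by simp) hpos.ne'
  rw [h, eq_C_of_natDegree_eq_zero hdeg]
  simp only [eval_C, eval_pow, eval_sub, eval_X, eval_one, intervalIntegral.integral_const_mul]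
  exact mul_ne_zero hb (mul_ne_zero hc hint)

/-! ### From matrices to rows -/

/-- The entries of a square matrix as a doubly indexed sequence, extended by zero. -/
def extZero {N : ℕ} (D : Matrix (Fin N) (Fin N) ℝ) (k m : ℕ) : ℝ :=
  if h : k < N ∧ m < N then D ⟨k, h.1⟩ ⟨m, h.2⟩ else 0

lemma extZero_of_lt {N : ℕ} (D : Matrix (Fin N) (Fin N) ℝ) {k m : ℕ} (hk : k < N)
    (hm : m < N) : extZero D k m = D ⟨k, hk⟩ ⟨m, hm⟩ := by
  simp [extZero, hk, hm]

/-- The sign factors in the wavelet conditions cancel half of them: orthogonality to `C` is a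
condition on rows of opposite parity only, orthonormality of `D` on rows of equal parity. -/
lemma IsWaveletMatrix.rows {N : ℕ} {c : ℕ → ℕ → ℝ} {D : Matrix (Fin N) (Fin N) ℝ}
    (h : IsWaveletMatrix (Matrix.of fun i j : Fin N => c i j) D) :
    (∀ k < N, InV N c k (extZero D k)) ∧ (∀ k < N, 0 < extZero D k k) ∧
    (∀ k < N, ∀ l < N, Even (k + l) →
      dotN N (extZero D k) (extZero D l) = if l = k then 1 else 0) := by
  obtain ⟨h1, h2, -, h4, h5⟩ := h
  refine ⟨fun k hk => ⟨fun m hm => ?_, fun i hi ho => ?_⟩, fun k hk => ?_,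
    fun k hk l hl he => ?_⟩
  · rw [extZero_of_lt D hk (hm.trans hk)]
    exact h1 _ _ (by simpa using hm)
  · have h := congrFun (congrFun h4 ⟨i, hi⟩) ⟨k, hk⟩
    simp only [Matrix.add_apply, Matrix.mul_apply, Matrix.of_apply, Matrix.transpose_apply,
      Matrix.zero_apply] at h
    have hs : ∀ m : Fin N, (-1 : ℝ) ^ (i + (m : ℕ)) * c i m *
        ((-1 : ℝ) ^ (k + (m : ℕ) + 1) * D ⟨k, hk⟩ m) = c i m * D ⟨k, hk⟩ m := by
      intro m
      have : (-1 : ℝ) ^ (i + (m : ℕ)) * (-1 : ℝ) ^ (k + (m : ℕ) + 1) = 1 := by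
        rw [← pow_add]
        apply Even.neg_one_pow
        rw [Nat.odd_iff] at ho; rw [Nat.even_iff]; omega
      linear_combination (c i m * D ⟨k, hk⟩ m) * this
    simp only [hs] at h
    rw [dotN, Finset.sum_range]
    have h' : ∑ m : Fin N, c i m * extZero D k m = ∑ m : Fin N, c i m * D ⟨k, hk⟩ m :=
      Finset.sum_congr rfl fun m _ => by rw [extZero_of_lt D hk m.2]
    rw [h']
    linarith
  · rw [extZero_of_lt D hk hk]; exact h2 _
  · have h := congrFun (congrFun h5 ⟨k, hk⟩) ⟨l, hl⟩
    simp only [Matrix.add_apply, Matrix.mul_apply, Matrix.of_apply, Matrix.transpose_apply,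
      Matrix.smul_apply, Matrix.one_apply, smul_eq_mul, Fin.mk.injEq] at h
    have hs : ∀ m : Fin N, (-1 : ℝ) ^ (k + (m : ℕ) + 1) * D ⟨k, hk⟩ m *
        ((-1 : ℝ) ^ (l + (m : ℕ) + 1) * D ⟨l, hl⟩ m) = D ⟨k, hk⟩ m * D ⟨l, hl⟩ m := by
      intro m
      have : (-1 : ℝ) ^ (k + (m : ℕ) + 1) * (-1 : ℝ) ^ (l + (m : ℕ) + 1) = 1 := by
        rw [← pow_add]
        apply Even.neg_one_pow
        rw [Nat.even_iff] at he ⊢; omega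
      linear_combination (D ⟨k, hk⟩ m * D ⟨l, hl⟩ m) * this
    simp only [hs] at h
    rw [dotN, Finset.sum_range]
    have h' : ∑ m : Fin N, extZero D k m * extZero D l m =
        ∑ m : Fin N, D ⟨k, hk⟩ m * D ⟨l, hl⟩ m :=
      Finset.sum_congr rfl fun m _ => by rw [extZero_of_lt D hk m.2, extZero_of_lt D hl m.2]
    rw [h']
    simp only [eq_comm (a := l)]
    linarith

theorem wavelet_matrix_nesting (n : ℕ) (hn : 2 ≤ n)
    (D : Matrix (Fin (n + 1)) (Fin (n + 1)) ℝ)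
    (D' : Matrix (Fin n) (Fin n) ℝ)
    (hD : IsWaveletMatrix (Matrix.of fun i j : Fin (n + 1) => alpertC i j) D)
    (hD' : IsWaveletMatrix (Matrix.of fun i j : Fin n => alpertC i j) D')
    (j : ℕ) (hj : 1 ≤ j) (hjn : 2 * j ≤ n) :
    D ⟨n - 2 * j, by omega⟩ ⟨n, by omega⟩ = 0 ∧
    ∀ m : ℕ, ∀ hm1 : n - 2 * j ≤ m, ∀ hm2 : m ≤ n - 1,
      D ⟨n - 2 * j, by omega⟩ ⟨m, by omega⟩ = D' ⟨n - 2 * j, by omega⟩ ⟨m, by omega⟩ := by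
  obtain ⟨b1, b2, b3⟩ := hD'.rows
  obtain ⟨a1, a2, a3⟩ := hD.rows
  -- The last row of `D` is supported on the last column, so rows orthogonal to it vanish there.
  have hlast : ∀ l < n, Even (l + n) → extZero D l n = 0 := by
    intro l hl he
    have h := a3 l (by omega) n (by omega) he
    rw [if_neg (by omega), dotN, Finset.sum_range_succ, Finset.sum_eq_zero, zero_add] at h
    · exact (mul_eq_zero.mp h).resolve_right (a2 n (by omega)).ne'
    · intro m hm
      rw [(a1 n (by omega)).1 m (Finset.mem_range.mp hm), mul_zero]
  have hkey := wavelet_row_unique (n := n) (c := alpertC) (d := extZero D) (e := extZero D')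
    alpertC_eq_zero alpertC_self_ne_zero (k := n - 2 * j) (j := j - 1) (by omega)
    (fun l h1 h2 h3 => by
      have hl0 := hlast l h2 (by rw [Nat.even_iff] at h3 ⊢; omega)
      refine ⟨⟨(a1 l (by omega)).1, fun i hi ho => ?_⟩, a2 l (by omega), ?_⟩
      · have h := (a1 l (by omega)).2 i (by omega) ho
        rwa [dotN, Finset.sum_range_succ, hl0, mul_zero, add_zero] at h
      · have h := a3 (n - 2 * j) (by omega) l (by omega) (by rwa [add_comm])
        rwa [dotN, Finset.sum_range_succ, hl0, mul_zero, add_zero] at h)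
    (fun l h1 h2 h3 => ⟨b1 l h2, b2 l h2, b3 _ (by omega) l h2 (by rwa [add_comm])⟩)
  constructor
  · have h := hlast (n - 2 * j) (by omega) (by rw [Nat.even_iff]; omega)
    rwa [extZero_of_lt D (by omega) (by omega)] at h
  · intro m hm1 hm2
    have h := hkey m (by omega)
    rwa [extZero_of_lt D (by omega) (by omega), extZero_of_lt D' (by omega) (by omega)] at h
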